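/- arXiv:1507.01562 — 7 statements merged into one kernel-verified Lean document; each statement's English description precedes it below -/
import Mathlib

section
/- Let Θ be a nonempty compact metric space, let ψ : Θ → ℝ^d be continuous, let ℓ : ℝ^d → ℝ be any function, let y ∈ ℝ^d, and let τ > 0. Suppose μ⋆ is an optimal solution of the problem of minimizing ℓ(Φμ − y) over all finite nonnegative Borel measures μ on Θ with μ(Θ) ≤ τ. Then there exist n ≤ d+1 points θ₁, …, θ_n ∈ Θ and nonnegative weights w₁, …, w_n with ∑_i w_i ≤ τ such that the atomic measure ν = ∑_{i=1}^n w_i δ_{θ_i} satisfies Φν = Φμ⋆; in particular ν is an optimal solution supported on at most d+1 points. -/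
open MeasureTheory

/-!
If `μstar = 0`, the empty sum of atoms works. Otherwise `Φ μstar = c • a`, where `c` is the mass of
`μstar` and `a` is the `μstar`-average of `ψ`, which lies in the closed convex hull of `ψ(Θ)`.
By Carathéodory's theorem every point of the convex hull is a convex combination of at most `d + 1`
values of `ψ` (`convexHull_subset_caratheodorySet`), and the set of such combinations is compact,
being a continuous image of a simplex times a power of `Θ` (`isCompact_caratheodorySet`). Hence `a`
itself is such a combination, and scaling its weights by `c` gives the atomic measure. Optimality
is inherited because the objective depends on a measure only through its image under `Φ`.
-/

/-- The set of convex combinations of `d + 1` (not necessarily distinct) values of `ψ`. -/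
def caratheodorySet {Θ : Type*} {d : ℕ} (ψ : Θ → EuclideanSpace ℝ (Fin d)) :
    Set (EuclideanSpace ℝ (Fin d)) :=
  (fun p : (Fin (d + 1) → ℝ) × (Fin (d + 1) → Θ) => ∑ i, p.1 i • ψ (p.2 i)) ''
    (stdSimplex ℝ (Fin (d + 1)) ×ˢ Set.univ)

lemma isCompact_caratheodorySet {Θ : Type*} [TopologicalSpace Θ] [CompactSpace Θ] {d : ℕ}
    {ψ : Θ → EuclideanSpace ℝ (Fin d)} (hψ : Continuous ψ) : IsCompact (caratheodorySet ψ) :=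
  ((isCompact_stdSimplex ℝ (Fin (d + 1))).prod isCompact_univ).image (by fun_prop)

/-- Carathéodory's theorem, with the combination padded by zero weights to length exactly
`d + 1`. -/
lemma convexHull_subset_caratheodorySet {Θ : Type*} [Nonempty Θ] {d : ℕ}
    (ψ : Θ → EuclideanSpace ℝ (Fin d)) :
    convexHull ℝ (Set.range ψ) ⊆ caratheodorySet ψ := by
  intro x hx
  obtain ⟨ι, _, z, w, hz, hind, hw, hsum, hx⟩ := eq_pos_convex_span_of_mem_convexHull hx
  have hcard : Fintype.card ι ≤ Fintype.card (Fin (d + 1)) := by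
    have h1 := hind.card_le_finrank_succ
    have h2 := Submodule.finrank_le (vectorSpan ℝ (Set.range z))
    simp only [finrank_euclideanSpace, Fintype.card_fin] at h2 ⊢
    omega
  obtain ⟨e⟩ := Function.Embedding.nonempty_of_card_le hcard
  choose θ hθ using fun i => hz (Set.mem_range_self i)
  let W : Fin (d + 1) → ℝ := Function.extend e w 0
  let T : Fin (d + 1) → Θ := Function.extend e θ (fun _ => Classical.arbitrary Θ)
  have hW : ∀ i, W (e i) = w i := fun i => e.injective.extend_apply _ _ i
  have hT : ∀ i, T (e i) = θ i := fun i => e.injective.extend_apply _ _ i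
  have hW0 : ∀ j, j ∉ Set.range e → W j = 0 := fun j hj => Function.extend_apply' _ _ _ hj
  refine ⟨(W, T), ⟨⟨fun j => ?_, ?_⟩, trivial⟩, ?_⟩
  · by_cases hj : j ∈ Set.range e
    · obtain ⟨i, rfl⟩ := hj
      exact (hw i).le.trans_eq (hW i).symm
    · exact (hW0 j hj).ge
  · rw [← hsum]
    exact (Fintype.sum_of_injective e e.injective _ _ hW0 fun i => (hW i).symm).symm
  · rw [← hx]
    refine (Fintype.sum_of_injective e e.injective _ _ (fun j hj => ?_) fun i => ?_).symm
    · simp [hW0 j hj]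
    · simp [hW, hT, hθ]

lemma integral_sum_smul_dirac {Θ : Type*} [MeasurableSpace Θ]
    [MeasurableSingletonClass Θ] {E : Type*} [NormedAddCommGroup E] [NormedSpace ℝ E]
    [CompleteSpace E] (ψ : Θ → E)
    {n : ℕ} (θ : Fin n → Θ) (w : Fin n → ℝ) (hw : ∀ i, 0 ≤ w i) :
    ∫ t, ψ t ∂(∑ i, ENNReal.ofReal (w i) • Measure.dirac (θ i)) = ∑ i, w i • ψ (θ i) := by
  rw [integral_finsetSum_measure fun i _ =>
    (integrable_dirac (by simp)).smul_measure ENNReal.ofReal_ne_top]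
  simp [integral_smul_measure, ENNReal.toReal_ofReal (hw _)]



/-- An optimal measure for the sparse inverse problem can be replaced by an
optimal atomic measure supported on at most `d + 1` points. -/
theorem stmt_2 {Θ : Type*} [MetricSpace Θ] [CompactSpace Θ] [Nonempty Θ]
    [MeasurableSpace Θ] [BorelSpace Θ]
    (d : ℕ) (ψ : Θ → EuclideanSpace ℝ (Fin d)) (hψ : Continuous ψ)
    (ℓ : EuclideanSpace ℝ (Fin d) → ℝ) (y : EuclideanSpace ℝ (Fin d))
    (τ : ℝ) (hτ : 0 < τ)
    (μstar : Measure Θ) (hfin : IsFiniteMeasure μstar)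
    (hmass : μstar Set.univ ≤ ENNReal.ofReal τ)
    (hopt : ∀ μ : Measure Θ, IsFiniteMeasure μ → μ Set.univ ≤ ENNReal.ofReal τ →
      ℓ ((∫ θ, ψ θ ∂μstar) - y) ≤ ℓ ((∫ θ, ψ θ ∂μ) - y)) :
    ∃ n : ℕ, n ≤ d + 1 ∧ ∃ (θ : Fin n → Θ) (w : Fin n → ℝ),
      (∀ i, 0 ≤ w i) ∧ ∑ i, w i ≤ τ ∧
      (∫ t, ψ t ∂(∑ i, ENNReal.ofReal (w i) • Measure.dirac (θ i))) = ∫ t, ψ t ∂μstar ∧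
      ∀ μ : Measure Θ, IsFiniteMeasure μ → μ Set.univ ≤ ENNReal.ofReal τ →
        ℓ ((∫ t, ψ t ∂(∑ i, ENNReal.ofReal (w i) • Measure.dirac (θ i))) - y) ≤
          ℓ ((∫ t, ψ t ∂μ) - y) := by
  suffices h : ∃ n : ℕ, n ≤ d + 1 ∧ ∃ (θ : Fin n → Θ) (w : Fin n → ℝ),
      (∀ i, 0 ≤ w i) ∧ ∑ i, w i ≤ τ ∧ ∑ i, w i • ψ (θ i) = ∫ t, ψ t ∂μstar by
    obtain ⟨n, hn, θ, w, hw, hs, h⟩ := h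
    rw [← integral_sum_smul_dirac ψ θ w hw] at h
    exact ⟨n, hn, θ, w, hw, hs, h, h.symm ▸ hopt⟩
  rcases eq_or_ne μstar 0 with rfl | hne
  · exact ⟨0, by omega, Fin.elim0, Fin.elim0, fun i => i.elim0, by simpa using hτ.le, by simp⟩
  have : NeZero μstar := ⟨hne⟩
  have hint : Integrable ψ μstar :=
    hψ.integrable_of_hasCompactSupport (HasCompactSupport.of_compactSpace ψ)
  have hmem : (⨍ t, ψ t ∂μstar) ∈ caratheodorySet ψ := by
    refine closure_minimal (convexHull_subset_caratheodorySet ψ)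
      (isCompact_caratheodorySet hψ).isClosed ?_
    exact (convex_convexHull ℝ _).closure.average_mem isClosed_closure
      (Filter.Eventually.of_forall fun t =>
        subset_closure (subset_convexHull ℝ _ (Set.mem_range_self t))) hint
  obtain ⟨⟨w, θ⟩, ⟨⟨hw, hsum⟩, -⟩, h⟩ := hmem
  refine ⟨d + 1, le_rfl, θ, fun i => μstar.real Set.univ * w i,
    fun i => mul_nonneg measureReal_nonneg (hw i), ?_, ?_⟩
  · rw [← Finset.mul_sum, hsum, mul_one]
    exact ENNReal.toReal_le_of_le_ofReal hτ.le hmass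
  · simp only [mul_smul, ← Finset.smul_sum]
    rw [← measure_smul_average, ← h]
end

section
/- Let Θ be a nonempty compact metric space, let ψ : Θ → ℝ^d be continuous, and let τ > 0. Then the set {Φμ : μ a finite nonnegative Borel measure on Θ with μ(Θ) ≤ τ} equals τ · conv(ψ(Θ) ∪ {0}), the scaling by τ of the convex hull of the image of ψ together with the origin. -/
open MeasureTheory Pointwise

/-!
Both inclusions rest on convexity. Write `K = conv(ψ(Θ) ∪ {0})`.

If `μ` has mass `m ≤ τ`, then `∫ ψ dμ` is `m` times the average of `ψ`. The average lies in `K`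
because `K` is convex and closed, and shrinking by `m / τ ≤ 1` stays in `K` because `0 ∈ K`.
Closedness of `K` is where finite dimension enters: by Carathéodory's theorem the convex hull of a
compact set is the continuous image of a compact set of weights and points
(`isCompact_convexHull_of_isCompact`).

Conversely, the set of attainable integrals is convex, and it contains `0` (zero measure) and
`τ • ψ θ` (the measure `τ δ_θ`), hence it contains `τ • K`.
-/

/-- In finite dimension the convex hull of a compact set is compact: by Carathéodory, `dim E + 1`
points suffice, so the hull is the image of (standard simplex) × (tuples of points of `s`). -/
theorem isCompact_convexHull_of_isCompact {E : Type*} [NormedAddCommGroup E] [NormedSpace ℝ E]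
    [FiniteDimensional ℝ E] {s : Set E} (hs : IsCompact s) : IsCompact (convexHull ℝ s) := by
  rcases s.eq_empty_or_nonempty with rfl | ⟨p, hp⟩
  · simp
  let n := Module.finrank ℝ E + 1
  let F : (Fin n → ℝ) × (Fin n → E) → E := fun q => ∑ i, q.1 i • q.2 i
  have hF : Continuous F := by fun_prop
  have hcompact : IsCompact (stdSimplex ℝ (Fin n) ×ˢ Set.univ.pi fun _ : Fin n => s) :=
    (isCompact_stdSimplex ℝ (Fin n)).prod (isCompact_univ_pi fun _ => hs)
  suffices h : convexHull ℝ s = F '' (stdSimplex ℝ (Fin n) ×ˢ Set.univ.pi fun _ => s) by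
    rw [h]
    exact hcompact.image hF
  apply Set.Subset.antisymm
  · intro x hx
    obtain ⟨ι, _, z, w, hz, hind, hw, hsum, rfl⟩ := eq_pos_convex_span_of_mem_convexHull hx
    have hcard : Fintype.card ι ≤ Fintype.card (Fin n) := by
      have h₁ := hind.card_le_finrank_succ
      have h₂ := Submodule.finrank_le (vectorSpan ℝ (Set.range z))
      simp only [Fintype.card_fin, n]
      omega
    obtain ⟨e⟩ := Function.Embedding.nonempty_of_card_le hcard
    -- Pad the combination to `n` terms with weight `0` at the base point `p`.
    refine ⟨(Function.extend e w 0, Function.extend e z fun _ => p), ⟨⟨?_, ?_⟩, ?_⟩, ?_⟩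
    · intro j
      by_cases hj : ∃ i, e i = j
      · obtain ⟨i, rfl⟩ := hj
        simpa [e.injective.extend_apply] using (hw i).le
      · simp [Function.extend_apply' _ _ _ hj]
    · rw [← hsum]
      refine (Fintype.sum_of_injective e e.injective _ _ ?_ ?_).symm
      · intro j hj
        simp [Function.extend_apply' _ _ _ hj]
      · intro i
        simp [e.injective.extend_apply]
    · intro j _
      by_cases hj : ∃ i, e i = j
      · obtain ⟨i, rfl⟩ := hj
        simpa [e.injective.extend_apply] using hz ⟨i, rfl⟩
      · simpa [Function.extend_apply' _ _ _ hj] using hp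
    · refine (Fintype.sum_of_injective e e.injective _ _ ?_ ?_).symm
      · intro j hj
        simp [Function.extend_apply' _ _ _ hj]
      · intro i
        simp [e.injective.extend_apply]
  · rintro _ ⟨⟨w, z⟩, ⟨⟨hw, hsum⟩, hz⟩, rfl⟩
    exact (convex_convexHull ℝ s).sum_mem (fun i _ => hw i) hsum
      fun i _ => subset_convexHull ℝ s (hz i trivial)

/-- The image of the set of nonnegative measures of total mass at most `τ`
under the forward operator `μ ↦ ∫ ψ dμ` equals `τ • conv(ψ(Θ) ∪ {0})`. -/
theorem stmt_4 {Θ : Type*} [MetricSpace Θ] [CompactSpace Θ] [Nonempty Θ]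
    [MeasurableSpace Θ] [BorelSpace Θ]
    (d : ℕ) (ψ : Θ → EuclideanSpace ℝ (Fin d)) (hψ : Continuous ψ)
    (τ : ℝ) (hτ : 0 < τ) :
    {x : EuclideanSpace ℝ (Fin d) | ∃ μ : Measure Θ, IsFiniteMeasure μ ∧
        μ Set.univ ≤ ENNReal.ofReal τ ∧ x = ∫ θ, ψ θ ∂μ} =
      τ • convexHull ℝ (Set.range ψ ∪ {0}) := by
  have hint : ∀ μ : Measure Θ, IsFiniteMeasure μ → Integrable ψ μ := fun μ _ =>
    hψ.integrable_of_hasCompactSupport (HasCompactSupport.of_compactSpace ψ)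
  apply Set.Subset.antisymm
  · rintro _ ⟨μ, hμ, hle, rfl⟩
    have hconv := convex_convexHull ℝ (Set.range ψ ∪ {0})
    have h0 : (0 : EuclideanSpace ℝ (Fin d)) ∈ convexHull ℝ (Set.range ψ ∪ {0}) :=
      subset_convexHull ℝ _ (Or.inr rfl)
    have hclosed : IsClosed (convexHull ℝ (Set.range ψ ∪ {0})) :=
      (isCompact_convexHull_of_isCompact
        ((isCompact_range hψ).union isCompact_singleton)).isClosed
    rcases eq_or_ne μ 0 with rfl | hne
    · exact ⟨0, h0, by simp⟩
    have : NeZero μ := ⟨hne⟩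
    have havg : (⨍ θ, ψ θ ∂μ) ∈ convexHull ℝ (Set.range ψ ∪ {0}) :=
      hconv.average_mem hclosed
        (Filter.Eventually.of_forall fun θ => subset_convexHull ℝ _ (Or.inl ⟨θ, rfl⟩)) (hint μ hμ)
    have hmass : μ.real Set.univ ≤ τ := ENNReal.toReal_le_of_le_ofReal hτ.le hle
    refine ⟨(μ.real Set.univ / τ) • ⨍ θ, ψ θ ∂μ,
      hconv.smul_mem_of_zero_mem h0 havg ⟨by positivity, (div_le_one hτ).2 hmass⟩, ?_⟩
    simp only [smul_smul, mul_div_cancel₀ _ hτ.ne']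
    exact measure_smul_average μ ψ
  · rw [← convexHull_smul]
    refine convexHull_min ?_ ?_
    · rintro _ ⟨_, ⟨θ, rfl⟩ | rfl, rfl⟩
      · refine ⟨ENNReal.ofReal τ • Measure.dirac θ, ?_, by simp, ?_⟩
        · exact Measure.smul_finite _ ENNReal.ofReal_ne_top
        · simp [integral_smul_measure, hτ.le]
      · exact ⟨0, inferInstance, by simp, by simp⟩
    · rintro _ ⟨μ, hμ, hμle, rfl⟩ _ ⟨ν, hν, hνle, rfl⟩ a b ha hb hab
      have hμ' : IsFiniteMeasure (ENNReal.ofReal a • μ) :=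
        Measure.smul_finite _ ENNReal.ofReal_ne_top
      have hν' : IsFiniteMeasure (ENNReal.ofReal b • ν) :=
        Measure.smul_finite _ ENNReal.ofReal_ne_top
      refine ⟨ENNReal.ofReal a • μ + ENNReal.ofReal b • ν, inferInstance, ?_, ?_⟩
      · calc (ENNReal.ofReal a • μ + ENNReal.ofReal b • ν) Set.univ
            = ENNReal.ofReal a * μ Set.univ + ENNReal.ofReal b * ν Set.univ := by simp
          _ ≤ ENNReal.ofReal a * ENNReal.ofReal τ + ENNReal.ofReal b * ENNReal.ofReal τ := by
              gcongr
          _ = ENNReal.ofReal τ := by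
              rw [← add_mul, ← ENNReal.ofReal_add ha hb, hab, ENNReal.ofReal_one, one_mul]
      · rw [integral_add_measure (hint _ hμ') (hint _ hν'), integral_smul_measure,
          integral_smul_measure, ENNReal.toReal_ofReal ha, ENNReal.toReal_ofReal hb]
end

section
/- Let Θ be a nonempty compact metric space, let ψ : Θ → ℝ^d be continuous, let ℓ : ℝ^d → ℝ be any function, let y ∈ ℝ^d, and let τ > 0. Then the infimum of ℓ(Φμ − y) over all finite nonnegative Borel measures μ on Θ with μ(Θ) ≤ τ equals the infimum of ℓ(x − y) over all x ∈ τ · conv(ψ(Θ) ∪ {0}). That is, the infinite-dimensional problem over measures and the finite-dimensional problem over ℝ^d have the same optimal value. -/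
/-!
The two sets of attained objective values coincide, because the image under `Φ` of the measures of
mass at most `τ` is exactly `τ • conv(ψ(Θ) ∪ {0})`.

* The image lies in the dilated hull: the average of `ψ` under a nonzero finite measure lies in
  every closed convex set containing `ψ(Θ)`, and the convex hull of a compact subset of `ℝ^d` is
  closed by Carathéodory's theorem (`isCompact_convexHull_of_finiteDimensional`).
  Scaling by `μ(Θ) / τ ≤ 1` keeps the point in the hull since `0` belongs to it.
* The dilated hull lies in the image: the image is convex, and it contains `0` (zero measure) and
  `τ • ψ θ` (the measure `τ • δ_θ`).
-/

open MeasureTheory Pointwise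

/-- By Carathéodory's theorem the hull is a finite union, over `n ≤ dim E + 1`, of the images of the
compact sets `stdSimplex × K^n` under `(w, z) ↦ ∑ wᵢ zᵢ`. -/
lemma isCompact_convexHull_of_finiteDimensional {E : Type*} [NormedAddCommGroup E]
    [NormedSpace ℝ E] [FiniteDimensional ℝ E] {K : Set E} (hK : IsCompact K) :
    IsCompact (convexHull ℝ K) := by
  have key : convexHull ℝ K = ⋃ n : Fin (Module.finrank ℝ E + 2),
      (fun p : (Fin n → ℝ) × (Fin n → E) => ∑ i, p.1 i • p.2 i) ''
        (stdSimplex ℝ (Fin n) ×ˢ Set.univ.pi fun _ => K) := by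
    ext x
    simp only [Set.mem_iUnion, Set.mem_image, Set.mem_prod, Set.mem_univ_pi, Prod.exists]
    constructor
    · intro hx
      obtain ⟨ι, _, z, w, hz, hind, hw, hw1, hx⟩ := eq_pos_convex_span_of_mem_convexHull hx
      have hcard := hind.card_le_finrank_succ
      have hle := Submodule.finrank_le (vectorSpan ℝ (Set.range z))
      let e := Fintype.equivFin ι
      refine ⟨⟨Fintype.card ι, by omega⟩, w ∘ e.symm, z ∘ e.symm, ⟨⟨fun i => (hw _).le, ?_⟩,
        fun i => hz ⟨_, rfl⟩⟩, ?_⟩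
      · rw [← hw1]
        exact e.symm.sum_comp w
      · rw [← hx]
        exact e.symm.sum_comp fun i => w i • z i
    · rintro ⟨n, w, z, ⟨⟨hw, hw1⟩, hz⟩, rfl⟩
      exact (convex_convexHull ℝ K).sum_mem (fun i _ => hw i) hw1
        fun i _ => subset_convexHull ℝ K (hz i)
  rw [key]
  refine isCompact_iUnion fun n => ?_
  exact ((isCompact_stdSimplex ℝ (Fin n)).prod (isCompact_univ_pi fun _ => hK)).image (by fun_prop)

/-- The points `Φμ`, as `μ` ranges over the measures of mass at most `τ`, form the dilated hull. -/
lemma exists_measure_integral_eq_iff {Θ : Type*} [MetricSpace Θ] [CompactSpace Θ]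
    [MeasurableSpace Θ] [BorelSpace Θ] {E : Type*} [NormedAddCommGroup E]
    [NormedSpace ℝ E] [FiniteDimensional ℝ E] {ψ : Θ → E} (hψ : Continuous ψ)
    {τ : ℝ} (hτ : 0 < τ) (x : E) :
    (∃ μ : Measure Θ, IsFiniteMeasure μ ∧ μ Set.univ ≤ ENNReal.ofReal τ ∧ ∫ θ, ψ θ ∂μ = x) ↔
      x ∈ τ • convexHull ℝ (Set.range ψ ∪ {0}) := by
  have hint : ∀ μ : Measure Θ, IsFiniteMeasure μ → Integrable ψ μ := fun μ _ =>
    hψ.integrable_of_hasCompactSupport (HasCompactSupport.of_compactSpace ψ)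
  have hconv := convex_convexHull ℝ (Set.range ψ ∪ {0})
  have hzero : (0 : E) ∈ convexHull ℝ (Set.range ψ ∪ {0}) := subset_convexHull ℝ _ (by simp)
  constructor
  · rintro ⟨μ, hμ, hle, rfl⟩
    rcases eq_or_ne μ 0 with rfl | h0
    · rw [integral_zero_measure]
      exact ⟨0, hzero, smul_zero τ⟩
    · have : NeZero μ := ⟨h0⟩
      have hclosed := (isCompact_convexHull_of_finiteDimensional
        ((isCompact_range hψ).union (isCompact_singleton (x := (0 : E))))).isClosed
      have hav : ⨍ θ, ψ θ ∂μ ∈ convexHull ℝ (Set.range ψ ∪ {0}) :=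
        hconv.average_mem hclosed
          (Filter.Eventually.of_forall fun θ => subset_convexHull ℝ _ (Or.inl ⟨θ, rfl⟩)) (hint μ hμ)
      have hm : μ.real Set.univ ≤ τ := ENNReal.toReal_le_of_le_ofReal hτ.le hle
      refine ⟨(μ.real Set.univ / τ) • ⨍ θ, ψ θ ∂μ, hconv.smul_mem_of_zero_mem hzero hav
        ⟨by positivity, (div_le_one hτ).2 hm⟩, ?_⟩
      change τ • ((μ.real Set.univ / τ) • ⨍ θ, ψ θ ∂μ) = _
      rw [smul_smul, mul_div_cancel₀ _ hτ.ne', measure_smul_average]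
  · rintro ⟨z, hz, rfl⟩
    let S : Set E := {z | ∃ μ : Measure Θ, IsFiniteMeasure μ ∧ μ Set.univ ≤ ENNReal.ofReal τ ∧
      ∫ θ, ψ θ ∂μ = τ • z}
    suffices h : convexHull ℝ (Set.range ψ ∪ {0}) ⊆ S from h hz
    refine convexHull_min ?_ ?_
    · rintro _ (⟨θ, rfl⟩ | rfl)
      · refine ⟨ENNReal.ofReal τ • Measure.dirac θ, Measure.smul_finite _ ENNReal.ofReal_ne_top,
          by simp, ?_⟩
        rw [integral_smul_measure, integral_dirac, ENNReal.toReal_ofReal hτ.le]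
      · exact ⟨0, inferInstance, by simp, by simp⟩
    · rintro u ⟨μ, hμ, hμle, hu⟩ v ⟨ν, hν, hνle, hv⟩ a b ha hb hab
      have hμ' := Measure.smul_finite μ (ENNReal.ofReal_ne_top (r := a))
      have hν' := Measure.smul_finite ν (ENNReal.ofReal_ne_top (r := b))
      refine ⟨ENNReal.ofReal a • μ + ENNReal.ofReal b • ν, inferInstance, ?_, ?_⟩
      · calc (ENNReal.ofReal a • μ + ENNReal.ofReal b • ν) Set.univ
            = ENNReal.ofReal a * μ Set.univ + ENNReal.ofReal b * ν Set.univ := by simp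
          _ ≤ ENNReal.ofReal a * ENNReal.ofReal τ + ENNReal.ofReal b * ENNReal.ofReal τ := by
              gcongr
          _ = ENNReal.ofReal τ := by
              rw [← add_mul, ← ENNReal.ofReal_add ha hb, hab, ENNReal.ofReal_one, one_mul]
      · rw [integral_add_measure (hint _ hμ') (hint _ hν'), integral_smul_measure,
          integral_smul_measure, ENNReal.toReal_ofReal ha, ENNReal.toReal_ofReal hb, hu, hv,
          smul_add, smul_comm a, smul_comm b]

/-- The infinite-dimensional problem over measures and the finite-dimensional
problem over `τ • conv(ψ(Θ) ∪ {0})` have the same optimal value. -/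
theorem stmt_6 {Θ : Type*} [MetricSpace Θ] [CompactSpace Θ] [Nonempty Θ]
    [MeasurableSpace Θ] [BorelSpace Θ]
    (d : ℕ) (ψ : Θ → EuclideanSpace ℝ (Fin d)) (hψ : Continuous ψ)
    (ℓ : EuclideanSpace ℝ (Fin d) → ℝ) (y : EuclideanSpace ℝ (Fin d))
    (τ : ℝ) (hτ : 0 < τ) :
    sInf {r : ℝ | ∃ μ : Measure Θ, IsFiniteMeasure μ ∧
        μ Set.univ ≤ ENNReal.ofReal τ ∧ r = ℓ ((∫ θ, ψ θ ∂μ) - y)} =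
      sInf {r : ℝ | ∃ x ∈ τ • convexHull ℝ (Set.range ψ ∪ {0}), r = ℓ (x - y)} := by
  congr 1
  ext r
  constructor
  · rintro ⟨μ, hμ, hle, rfl⟩
    exact ⟨_, (exists_measure_integral_eq_iff hψ hτ _).1 ⟨μ, hμ, hle, rfl⟩, rfl⟩
  · rintro ⟨x, hx, rfl⟩
    obtain ⟨μ, hμ, hle, rfl⟩ := (exists_measure_integral_eq_iff hψ hτ x).2 hx
    exact ⟨μ, hμ, hle, rfl⟩
end

section
/- Let Θ be a nonempty compact metric space, let ψ : Θ → ℝ^d be continuous, and let x ∈ ℝ^d. Then the infimum (in [0, ∞], with the convention that the infimum of the empty set is ∞) of ∑_{i=1}^n c_i over all finite representations x = ∑_{i=1}^n c_i ψ(θ_i) with n ∈ ℕ, c_i ≥ 0, θ_i ∈ Θ, equals the infimum of μ(Θ) over all finite nonnegative Borel measures μ on Θ with Φμ = x. In other words, the atomic norm of x with respect to the atomic set ψ(Θ) ∪ {0} equals the minimal total mass of a nonnegative measure whose image under the forward operator is x. -/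
/-!
The two sets of attainable costs coincide, so their infima do.

A finite representation `x = ∑ wᵢ ψ(θᵢ)` is the integral of `ψ` against `∑ wᵢ δ_{θᵢ}`, whose mass
is `∑ wᵢ`. Conversely, for a nonzero finite measure `μ` the average of `ψ` lies in every closed
convex set containing `ψ(Θ)`. Since `ψ(Θ)` is compact in a finite-dimensional space, Carathéodory's
theorem shows that its convex hull is already closed (`isClosed_convexHull_of_isCompact`); hence
the average is a finite convex combination of atoms `ψ(θᵢ)`, and scaling the coefficients by `μ(Θ)`
gives a representation of `∫ ψ dμ` of total weight exactly `μ(Θ)`.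
-/

open MeasureTheory

/-- By Carathéodory's theorem the convex hull of a compact set `s` is the image of the compact set
`stdSimplex × s ^ (dim E + 1)` under `(w, z) ↦ ∑ wᵢ zᵢ`. -/
lemma isClosed_convexHull_of_isCompact {E : Type*} [NormedAddCommGroup E] [NormedSpace ℝ E]
    [FiniteDimensional ℝ E] {s : Set E} (hs : IsCompact s) : IsClosed (convexHull ℝ s) := by
  rcases s.eq_empty_or_nonempty with rfl | ⟨y, hy⟩
  · simp
  let N := Module.finrank ℝ E + 1
  have hK : IsCompact (stdSimplex ℝ (Fin N) ×ˢ (Set.univ.pi fun _ : Fin N => s)) :=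
    (isCompact_stdSimplex ℝ (Fin N)).prod (isCompact_univ_pi fun _ => hs)
  have hcont : Continuous fun p : (Fin N → ℝ) × (Fin N → E) => ∑ i, p.1 i • p.2 i := by
    fun_prop
  convert! (hK.image hcont).isClosed using 1
  ext x
  constructor
  · intro hx
    obtain ⟨ι, _, z, w, hz, hind, hw, hw1, rfl⟩ := eq_pos_convex_span_of_mem_convexHull hx
    have hcard : Fintype.card ι ≤ Fintype.card (Fin N) := by
      rw [Fintype.card_fin]
      exact hind.card_le_finrank_succ.trans
        (Nat.add_le_add_right (Submodule.finrank_le _) 1)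
    obtain ⟨e⟩ := Function.Embedding.nonempty_of_card_le hcard
    -- Pad the family to exactly `N` points, giving weight zero to copies of `y`.
    refine ⟨(Function.extend e w 0, Function.extend e z fun _ => y), ⟨⟨?_, ?_⟩, ?_⟩, ?_⟩
    · intro i
      by_cases hi : ∃ a, e a = i
      · obtain ⟨a, rfl⟩ := hi
        simpa [e.injective.extend_apply] using (hw a).le
      · simp [Function.extend_apply' _ _ _ hi]
    · rw [← hw1]
      symm
      refine Fintype.sum_of_injective e e.injective _ _ ?_ ?_
      · intro i hi
        simp [Function.extend_apply' _ _ _ hi]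
      · intro i
        simp [e.injective.extend_apply]
    · intro i _
      by_cases hi : ∃ a, e a = i
      · obtain ⟨a, rfl⟩ := hi
        simpa [e.injective.extend_apply] using hz ⟨a, rfl⟩
      · simpa [Function.extend_apply' _ _ _ hi] using hy
    · symm
      refine Fintype.sum_of_injective e e.injective _ _ ?_ ?_
      · intro i hi
        simp [Function.extend_apply' _ _ _ hi]
      · intro i
        simp [e.injective.extend_apply]
  · rintro ⟨⟨w, z⟩, ⟨⟨hw, hw1⟩, hz⟩, rfl⟩
    exact mem_convexHull_of_exists_fintype w z hw hw1 (fun i => hz i trivial) rfl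

/-- The atomic norm of `x` with respect to the atoms `ψ(Θ) ∪ {0}` (the
infimum, in `[0,∞]`, of the total weight over all finite conic representations of `x`)
equals the infimum of the total mass over all finite nonnegative measures `μ` with
`Φμ = x`. -/
theorem stmt_7 {Θ : Type*} [MetricSpace Θ] [CompactSpace Θ] [Nonempty Θ]
    [MeasurableSpace Θ] [BorelSpace Θ]
    (d : ℕ) (ψ : Θ → EuclideanSpace ℝ (Fin d)) (hψ : Continuous ψ)
    (x : EuclideanSpace ℝ (Fin d)) :
    sInf {c : ENNReal | ∃ (n : ℕ) (w : Fin n → ℝ) (θ : Fin n → Θ),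
        (∀ i, 0 ≤ w i) ∧ x = ∑ i, w i • ψ (θ i) ∧ c = ENNReal.ofReal (∑ i, w i)} =
      sInf {c : ENNReal | ∃ μ : Measure Θ, IsFiniteMeasure μ ∧
        x = ∫ θ, ψ θ ∂μ ∧ c = μ Set.univ} := by
  have hint : ∀ μ : Measure Θ, IsFiniteMeasure μ → Integrable ψ μ := fun μ _ =>
    hψ.integrable_of_hasCompactSupport (HasCompactSupport.of_compactSpace ψ)
  congr 1
  ext c
  constructor
  · rintro ⟨n, w, θ, hw, rfl, rfl⟩
    have hfin : ∀ i, IsFiniteMeasure (ENNReal.ofReal (w i) • Measure.dirac (θ i)) := fun i =>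
      Measure.smul_finite _ ENNReal.ofReal_ne_top
    refine ⟨∑ i, ENNReal.ofReal (w i) • Measure.dirac (θ i), inferInstance, ?_, ?_⟩
    · rw [integral_finsetSum_measure fun i _ => hint _ (hfin i)]
      refine Finset.sum_congr rfl fun i _ => ?_
      rw [integral_smul_measure, integral_dirac, ENNReal.toReal_ofReal (hw i)]
    · rw [ENNReal.ofReal_sum_of_nonneg fun i _ => hw i]
      simp
  · rintro ⟨μ, hμ, rfl, rfl⟩
    rcases eq_or_ne μ 0 with rfl | h0
    · exact ⟨0, Fin.elim0, Fin.elim0, fun i => i.elim0, by simp, by simp⟩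
    have : NeZero μ := ⟨h0⟩
    have hmem : (⨍ θ, ψ θ ∂μ) ∈ convexHull ℝ (Set.range ψ) :=
      (convex_convexHull ℝ _).average_mem
        (isClosed_convexHull_of_isCompact (isCompact_range hψ))
        (.of_forall fun θ => subset_convexHull ℝ _ ⟨θ, rfl⟩) (hint μ hμ)
    obtain ⟨ι, _, w, z, hw, hw1, hz, hsum⟩ := mem_convexHull_iff_exists_fintype.1 hmem
    choose θ hθ using hz
    let e := (Fintype.equivFin ι).symm
    refine ⟨Fintype.card ι, fun i => μ.real Set.univ * w (e i), fun i => θ (e i),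
      fun i => mul_nonneg measureReal_nonneg (hw _), ?_, ?_⟩
    · rw [e.sum_comp fun i => (μ.real Set.univ * w i) • ψ (θ i)]
      simp_rw [hθ, mul_smul]
      rw [← Finset.smul_sum, hsum, measure_smul_average]
    · rw [e.sum_comp fun i => μ.real Set.univ * w i, ← Finset.mul_sum, hw1, mul_one,
        ofReal_measureReal]
end

section
/- Let Θ be a nonempty compact metric space, let ψ : Θ → ℝ^d be continuous, let ℓ : ℝ^d → ℝ be convex and differentiable, let y ∈ ℝ^d, and let τ > 0. Let μ_k be a finite nonnegative Borel measure on Θ with μ_k(Θ) ≤ τ, set g = ∇ℓ(Φμ_k − y), and let θ⋆ ∈ Θ minimize θ ↦ ⟨ψ(θ), g⟩ over Θ. Then for every finite nonnegative Borel measure μ on Θ with μ(Θ) ≤ τ, one has ℓ(Φμ − y) ≥ ℓ(Φμ_k − y) − ⟨g, Φμ_k⟩ + min(0, τ⟨ψ(θ⋆), g⟩). In particular the suboptimality of μ_k for the problem of minimizing ℓ(Φμ − y) over such measures is at most ⟨g, Φμ_k⟩ − min(0, τ⟨ψ(θ⋆), g⟩). -/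
/-! The argument is the Frank–Wolfe duality gap. Convexity gives the tangent inequality
`ℓ (Φμ - y) ≥ ℓ (Φμk - y) + ⟪g, Φμ - Φμk⟫` (`ConvexOn.tangent_le`). Moreover
`⟪g, Φμ⟫ = ∫ ⟪ψ θ, g⟫ dμ ≥ μ(Θ) ⟪ψ θstar, g⟫`, and since `0 ≤ μ(Θ) ≤ τ` the right-hand side is
at least `min 0 (τ ⟪ψ θstar, g⟫)`. -/

open MeasureTheory RealInnerProductSpace

/-- A differentiable convex function lies above its tangent hyperplanes; this is the
one-dimensional slope inequality on the line through `a` and `b`. -/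
theorem ConvexOn.tangent_le {E : Type*} [NormedAddCommGroup E] [InnerProductSpace ℝ E]
    [CompleteSpace E] {f : E → ℝ} (hf : ConvexOn ℝ Set.univ f) (hd : Differentiable ℝ f)
    (a b : E) : f a + ⟪gradient f a, b - a⟫ ≤ f b := by
  have hc : ConvexOn ℝ Set.univ (f ∘ AffineMap.lineMap (k := ℝ) a b) := by
    simpa using hf.comp_affineMap (AffineMap.lineMap (k := ℝ) a b)
  have hderiv : HasDerivAt (f ∘ AffineMap.lineMap (k := ℝ) a b) ⟪gradient f a, b - a⟫ 0 := by
    have h1 : HasFDerivAt f (InnerProductSpace.toDual ℝ E (gradient f a))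
        (AffineMap.lineMap (k := ℝ) a b 0) := by
      simpa using (hd a).hasGradientAt.hasFDerivAt
    simpa using h1.comp_hasDerivAt (0 : ℝ) (AffineMap.hasDerivAt_lineMap (a := a) (b := b))
  have h := hc.le_slope_of_hasDerivAt (Set.mem_univ 0) (Set.mem_univ 1) one_pos hderiv
  simp only [slope_def_field, Function.comp_apply, AffineMap.lineMap_apply_zero,
    AffineMap.lineMap_apply_one, sub_zero, div_one] at h
  linarith

/-- The conditional gradient lower bound for the measure problem: for any
feasible measure `μ`, `ℓ(Φμ − y) ≥ ℓ(Φμ_k − y) − ⟪g, Φμ_k⟫ + min 0 (τ⟪ψ θ⋆, g⟫)` where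
`g = ∇ℓ(Φμ_k − y)` and `θ⋆` minimizes `θ ↦ ⟪ψ θ, g⟫`. -/
theorem stmt_10 {Θ : Type*} [MetricSpace Θ] [CompactSpace Θ] [Nonempty Θ]
    [MeasurableSpace Θ] [BorelSpace Θ]
    (d : ℕ) (ψ : Θ → EuclideanSpace ℝ (Fin d)) (hψ : Continuous ψ)
    (ℓ : EuclideanSpace ℝ (Fin d) → ℝ)
    (hconv : ConvexOn ℝ Set.univ ℓ) (hdiff : Differentiable ℝ ℓ)
    (y : EuclideanSpace ℝ (Fin d)) (τ : ℝ) (hτ : 0 < τ)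
    (μk : Measure Θ) (hμk_fin : IsFiniteMeasure μk)
    (hμk_mass : μk Set.univ ≤ ENNReal.ofReal τ)
    (g : EuclideanSpace ℝ (Fin d)) (hg : g = gradient ℓ ((∫ θ, ψ θ ∂μk) - y))
    (θstar : Θ) (hθstar : ∀ θ, ⟪ψ θstar, g⟫ ≤ ⟪ψ θ, g⟫) :
    ∀ μ : Measure Θ, IsFiniteMeasure μ → μ Set.univ ≤ ENNReal.ofReal τ →
      ℓ ((∫ θ, ψ θ ∂μk) - y) - ⟪g, ∫ θ, ψ θ ∂μk⟫ + min 0 (τ * ⟪ψ θstar, g⟫) ≤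
        ℓ ((∫ θ, ψ θ ∂μ) - y) := by
  intro μ hμ hmass
  have hint : Integrable ψ μ :=
    hψ.integrable_of_hasCompactSupport (HasCompactSupport.of_compactSpace ψ)
  have htan := hconv.tangent_le hdiff ((∫ θ, ψ θ ∂μk) - y) ((∫ θ, ψ θ ∂μ) - y)
  rw [← hg, sub_sub_sub_cancel_right, inner_sub_right] at htan
  have hm : μ.real Set.univ ≤ τ := ENNReal.toReal_le_of_le_ofReal hτ.le hmass
  have hm0 : 0 ≤ μ.real Set.univ := measureReal_nonneg
  have hlow : μ.real Set.univ * ⟪ψ θstar, g⟫ ≤ ⟪g, ∫ θ, ψ θ ∂μ⟫ := by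
    rw [← integral_inner hint g]
    calc μ.real Set.univ * ⟪ψ θstar, g⟫ = ∫ _, ⟪ψ θstar, g⟫ ∂μ := by simp
      _ ≤ ∫ θ, ⟪g, ψ θ⟫ ∂μ := by
        refine integral_mono (integrable_const _) (hint.const_inner g) fun θ => ?_
        simpa only [real_inner_comm] using hθstar θ
  have hmin : min 0 (τ * ⟪ψ θstar, g⟫) ≤ μ.real Set.univ * ⟪ψ θstar, g⟫ := by
    rcases le_total 0 ⟪ψ θstar, g⟫ with h | h
    · exact (min_le_left _ _).trans (mul_nonneg hm0 h)
    · exact (min_le_right _ _).trans (mul_le_mul_of_nonpos_right hm h)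
  linarith
end

section
/- Let S ⊆ ℝ^d be a nonempty compact convex set, let f : ℝ^d → ℝ be convex and differentiable, and let C ≥ 0 satisfy the curvature condition: for all x, s ∈ S and all γ ∈ [0,1], f(x + γ(s − x)) ≤ f(x) + γ⟨∇f(x), s − x⟩ + (γ²/2)C. Let f⋆ = min_{x∈S} f(x), and let ε ≥ 0, γ ∈ [0,1]. Suppose x, s ∈ S satisfy ⟨∇f(x), s⟩ ≤ min_{s'∈S} ⟨∇f(x), s'⟩ + ε, and suppose x⁺ ∈ S satisfies f(x⁺) ≤ f(x + γ(s − x)). Then f(x⁺) − f⋆ ≤ (1 − γ)(f(x) − f⋆) + (γ²/2)C + γε. -/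
/-!
The curvature condition bounds `f xplus` by `f x + γ ⟪∇f x, s - x⟫ + γ² / 2 * C`. Comparing the
approximate oracle output `s` with a minimizer `z` of `f` on `S` gives
`⟪∇f x, s - x⟫ ≤ ⟪∇f x, z - x⟫ + ε`, and the first-order characterization of convexity
(`gradient_inequality`) bounds the right-hand side by `fstar - f x + ε`.
-/

open RealInnerProductSpace

/-- First-order characterization of convexity: the graph of a convex function lies above its
tangent hyperplanes. It follows from the one-variable case along the segment from `x` to `y`. -/
lemma gradient_inequality {d : ℕ} {f : EuclideanSpace ℝ (Fin d) → ℝ}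
    (hconv : ConvexOn ℝ Set.univ f) (hdiff : Differentiable ℝ f)
    (x y : EuclideanSpace ℝ (Fin d)) :
    f x + ⟪gradient f x, y - x⟫ ≤ f y := by
  have hc : ConvexOn ℝ Set.univ (f ∘ AffineMap.lineMap (k := ℝ) x y) := by
    simpa using hconv.comp_affineMap (AffineMap.lineMap (k := ℝ) x y)
  have hd : HasDerivAt (f ∘ AffineMap.lineMap (k := ℝ) x y) ⟪gradient f x, y - x⟫ 0 := by
    have h1 : HasFDerivAt f (InnerProductSpace.toDual ℝ _ (gradient f x))
        (AffineMap.lineMap (k := ℝ) x y (0 : ℝ)) := by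
      simpa using (hdiff x).hasGradientAt.hasFDerivAt
    simpa using h1.comp_hasDerivAt (0 : ℝ) AffineMap.hasDerivAt_lineMap
  have h := hc.le_slope_of_hasDerivAt (Set.mem_univ 0) (Set.mem_univ 1) zero_lt_one hd
  simp only [slope_def_field, Function.comp_apply, AffineMap.lineMap_apply_zero,
    AffineMap.lineMap_apply_one, sub_zero, div_one] at h
  linarith

/-- One-step descent estimate for the conditional gradient method with an
approximate linear minimization oracle and an arbitrary improvement step. -/
theorem stmt_11 (d : ℕ) (S : Set (EuclideanSpace ℝ (Fin d)))
    (hS_ne : S.Nonempty) (hS_cpt : IsCompact S) (hS_cvx : Convex ℝ S)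
    (f : EuclideanSpace ℝ (Fin d) → ℝ)
    (hconv : ConvexOn ℝ Set.univ f) (hdiff : Differentiable ℝ f)
    (C : ℝ) (hC : 0 ≤ C)
    (hcurv : ∀ x ∈ S, ∀ s ∈ S, ∀ γ ∈ Set.Icc (0 : ℝ) 1,
      f (x + γ • (s - x)) ≤ f x + γ * ⟪gradient f x, s - x⟫ + γ ^ 2 / 2 * C)
    (fstar : ℝ) (hfstar : IsLeast (f '' S) fstar)
    (ε : ℝ) (hε : 0 ≤ ε) (γ : ℝ) (hγ : γ ∈ Set.Icc (0 : ℝ) 1)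
    (x s : EuclideanSpace ℝ (Fin d)) (hx : x ∈ S) (hs : s ∈ S)
    (hlmo : ∀ s' ∈ S, ⟪gradient f x, s⟫ ≤ ⟪gradient f x, s'⟫ + ε)
    (xplus : EuclideanSpace ℝ (Fin d)) (hxplus : xplus ∈ S)
    (himp : f xplus ≤ f (x + γ • (s - x))) :
    f xplus - fstar ≤ (1 - γ) * (f x - fstar) + γ ^ 2 / 2 * C + γ * ε := by
  obtain ⟨⟨z, hz, rfl⟩, -⟩ := hfstar
  have hstep := hcurv x hx s hs γ hγ
  have hgrad := gradient_inequality hconv hdiff x z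
  have horacle := hlmo z hz
  rw [inner_sub_right] at hstep hgrad
  have hgap : ⟪gradient f x, s⟫ - ⟪gradient f x, x⟫ ≤ f z - f x + ε := by linarith
  have := mul_le_mul_of_nonneg_left hgap hγ.1
  linarith
end

section
/- Let S ⊆ ℝ^d be a nonempty compact convex set, let f : ℝ^d → ℝ be convex and differentiable, and let C ≥ 0 satisfy the curvature condition: for all x, s ∈ S and all γ ∈ [0,1], f(x + γ(s − x)) ≤ f(x) + γ⟨∇f(x), s − x⟩ + (γ²/2)C. Let f⋆ = min_{x∈S} f(x) and let ζ ≥ 0. Suppose sequences (x_k)_{k≥0} and (s_k)_{k≥0} in S satisfy, for every k ≥ 0: (i) ⟨∇f(x_k), s_k⟩ ≤ min_{s∈S} ⟨∇f(x_k), s⟩ + Cζ/(k+2), and (ii) f(x_{k+1}) ≤ f(x_k + (2/(k+2))(s_k − x_k)). Then for every k ≥ 1, f(x_k) − f⋆ ≤ 2C(1+ζ)/(k+2). -/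
/-!
Write `h k = f (x k) - fstar` and `γ = 2 / (k + 2)`. The curvature condition, the precision of the
linear minimization and the gradient inequality `f x + ⟪∇f x, y - x⟫ ≤ f y` at a minimizer `y`
combine into the recursion `h (k + 1) ≤ (1 - γ) h k + (γ ^ 2 / 2) C (1 + ζ)`, since the
oracle error `C ζ / (k + 2)` equals `(γ / 2) C ζ`. At `k = 0` one has `γ = 1`, so `h 0` drops out
and `h 1 ≤ C (1 + ζ) / 2`; the bound then propagates by induction because
`(k + 1) (k + 3) ≤ (k + 2) ^ 2`.
-/

open RealInnerProductSpace

/-- The graph of a convex differentiable function lies above its tangent hyperplanes; proved by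
restricting to the line through `x` and `y`. -/
lemma add_inner_gradient_le {E : Type*} [NormedAddCommGroup E] [InnerProductSpace ℝ E]
    [CompleteSpace E] {f : E → ℝ} (hconv : ConvexOn ℝ Set.univ f) (hdiff : Differentiable ℝ f)
    (x y : E) : f x + ⟪gradient f x, y - x⟫ ≤ f y := by
  have hc : ConvexOn ℝ Set.univ (fun t : ℝ => f (AffineMap.lineMap x y t)) := by
    exact hconv.comp_affineMap (AffineMap.lineMap x y : ℝ →ᵃ[ℝ] E)
  have hd : HasDerivAt (fun t : ℝ => f (AffineMap.lineMap x y t)) ⟪gradient f x, y - x⟫ 0 := by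
    have h1 : HasFDerivAt f (InnerProductSpace.toDual ℝ E (gradient f x))
        (AffineMap.lineMap x y (0 : ℝ)) := by
      simpa using (hdiff x).hasGradientAt.hasFDerivAt
    exact h1.comp_hasDerivAt (0 : ℝ) AffineMap.hasDerivAt_lineMap
  have h := hc.le_slope_of_hasDerivAt (Set.mem_univ 0) (Set.mem_univ 1) one_pos hd
  simp only [slope_def_field, AffineMap.lineMap_apply_one, AffineMap.lineMap_apply_zero,
    sub_zero, div_one] at h
  linarith

/-- Convergence of the conditional gradient method with approximate linear
minimization (precision `Cζ/(k+2)`) and arbitrary improvement steps: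
`f(x_k) − f⋆ ≤ 2C(1+ζ)/(k+2)` for all `k ≥ 1`. -/
theorem stmt_12 (d : ℕ) (S : Set (EuclideanSpace ℝ (Fin d)))
    (hS_ne : S.Nonempty) (hS_cpt : IsCompact S) (hS_cvx : Convex ℝ S)
    (f : EuclideanSpace ℝ (Fin d) → ℝ)
    (hconv : ConvexOn ℝ Set.univ f) (hdiff : Differentiable ℝ f)
    (C : ℝ) (hC : 0 ≤ C)
    (hcurv : ∀ x ∈ S, ∀ s ∈ S, ∀ γ ∈ Set.Icc (0 : ℝ) 1,
      f (x + γ • (s - x)) ≤ f x + γ * ⟪gradient f x, s - x⟫ + γ ^ 2 / 2 * C)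
    (fstar : ℝ) (hfstar : IsLeast (f '' S) fstar)
    (ζ : ℝ) (hζ : 0 ≤ ζ)
    (x s : ℕ → EuclideanSpace ℝ (Fin d))
    (hx : ∀ k, x k ∈ S) (hs : ∀ k, s k ∈ S)
    (hlmo : ∀ k, ∀ s' ∈ S,
      ⟪gradient f (x k), s k⟫ ≤ ⟪gradient f (x k), s'⟫ + C * ζ / (k + 2))
    (himp : ∀ k, f (x (k + 1)) ≤ f (x k + ((2 : ℝ) / (k + 2)) • (s k - x k))) :
    ∀ k : ℕ, 1 ≤ k → f (x k) - fstar ≤ 2 * C * (1 + ζ) / (k + 2) := by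
  obtain ⟨⟨y, hyS, hy⟩, -⟩ := hfstar
  have rec_bound : ∀ k : ℕ, f (x (k + 1)) - fstar ≤
      (1 - 2 / ((k : ℝ) + 2)) * (f (x k) - fstar)
        + (2 / ((k : ℝ) + 2)) ^ 2 / 2 * (C * (1 + ζ)) := by
    intro k
    have hk : (0 : ℝ) < (k : ℝ) + 2 := by positivity
    have hγ0 : 0 ≤ 2 / ((k : ℝ) + 2) := by positivity
    have hγ1 : 2 / ((k : ℝ) + 2) ≤ 1 := by
      rw [div_le_one hk]
      linarith [k.cast_nonneg (α := ℝ)]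
    have hcv := hcurv (x k) (hx k) (s k) (hs k) _ ⟨hγ0, hγ1⟩
    have hgr := add_inner_gradient_le hconv hdiff (x k) y
    have hl := hlmo k y hyS
    have hin : ⟪gradient f (x k), s k - x k⟫
        ≤ -(f (x k) - fstar) + 2 / ((k : ℝ) + 2) / 2 * (C * ζ) := by
      have he : C * ζ / ((k : ℝ) + 2) = 2 / ((k : ℝ) + 2) / 2 * (C * ζ) := by
        field_simp
      rw [inner_sub_right] at hgr ⊢
      linarith
    have hmul := mul_le_mul_of_nonneg_left hin hγ0
    linarith [himp k]
  have hA : 0 ≤ C * (1 + ζ) := by positivity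
  intro k hk
  induction k, hk using Nat.le_induction with
  | base =>
    have h := rec_bound 0
    norm_num at h ⊢
    linarith
  | succ k hk ih =>
    refine (rec_bound k).trans ?_
    have hk2 : (0 : ℝ) < (k : ℝ) + 2 := by positivity
    have hcoef : 0 ≤ 1 - 2 / ((k : ℝ) + 2) := by
      rw [sub_nonneg, div_le_one hk2]
      linarith [k.cast_nonneg (α := ℝ)]
    have hmul := mul_le_mul_of_nonneg_left ih hcoef
    have hsum : (1 - 2 / ((k : ℝ) + 2)) * (2 * C * (1 + ζ) / (k + 2))
        + (2 / ((k : ℝ) + 2)) ^ 2 / 2 * (C * (1 + ζ))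
        = 2 * (C * (1 + ζ)) * (((k : ℝ) + 1) / ((k : ℝ) + 2) ^ 2) := by
      field_simp
      ring
    have hfrac : ((k : ℝ) + 1) / ((k : ℝ) + 2) ^ 2 ≤ 1 / ((k : ℝ) + 3) := by
      rw [div_le_div_iff₀ (by positivity) (by positivity)]
      nlinarith
    have hlast : 2 * C * (1 + ζ) / (((k + 1 : ℕ) : ℝ) + 2)
        = 2 * (C * (1 + ζ)) * (1 / ((k : ℝ) + 3)) := by
      push_cast
      rw [show (k : ℝ) + 1 + 2 = k + 3 by ring]
      ring
    rw [hlast]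
    have := mul_le_mul_of_nonneg_left hfrac (by positivity : 0 ≤ 2 * (C * (1 + ζ)))
    linarith
end
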